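/- Boettcher coordinate on a superattracting immediate basin: let p be a polynomial over ℂ of degree d ≥ 2, f(z) = p.eval (conj z), and let z₀ be a superattracting fixed point: f(z₀) = z₀ and p.derivative.eval (conj z₀) = 0. Let m ≥ 2 be the local degree of f at z₀, i.e., the multiplicity of conj z₀ as a root of the polynomial p − C z₀. Let A be the immediate basin of z₀, the connected component containing z₀ of {z : ℂ | f^[n](z) → z₀}. If A contains no critical point of f other than z₀, then A is simply connected and there is a conformal map of the open unit disk onto A conjugating w ↦ (conj w)^m to f: there exists φ : ℂ → ℂ, complex analytic and injective on the open unit disk 𝔻, with φ(0) = z₀, φ(𝔻) = A, and f(φ(w)) = φ((conj w)^m) for all w ∈ 𝔻. -/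

import Mathlib

open Filter Topology

open Metric Set
open scoped ComplexConjugate

/-!
Near `z₀` the map `z ↦ conj (f z - z₀)` is holomorphic and equals `(z - z₀) ^ m * exp (ℓ z)`. For
`ψ z = (z - z₀) * exp (ζ z)` the Böttcher equation `ψ (f z) = conj (ψ z) ^ m` becomes the linear
equation `m * ζ z = ℓ z + conj (ζ (f z))`, solved by a geometrically convergent series. The local
inverse `φ` of `ψ` satisfies `f (φ w) = φ (conj w ^ m)` on a small disk.

The right-hand side of this equation makes sense on the disk of radius `R` as soon as `φ` is
defined on the disk of radius `R ^ m`. Since `f : A → A` is a covering over `A \ {z₀}`, the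
function `s ↦ φ (conj (exp s) ^ m)` on the half plane `‖exp s‖ < R` lifts through `f`; by the
identity theorem the lift is `2πi`-periodic and agrees with `φ ∘ exp` where both are defined, so
`φ` extends to the disk of radius `R`. The extension is injective: if `φ a = φ b` with `a ≠ 0`,
then `b = ω * a` with `ω ^ m = 1`, and the identity theorem gives `φ = φ (ω * ·)`, so `ω = 1`.
Extending repeatedly, `φ` reaches the unit disk. Its image is open, and it is closed in `A`: a
point `z` of `A` enters `φ (ball 0 (1 / 2))` after some number `n` of iterations, so the image near
`z` lies in the compact set `φ (closedBall 0 ρ)` with `ρ ^ m ^ n = 1 / 2`. As `A` is connected, the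
image is all of `A`.
-/

section LocalCoordinate

variable {f ℓ q : ℂ → ℂ} {z₀ : ℂ} {B : Set ℂ}

lemma differentiableAt_conj_comp {g : ℂ → ℂ} {z : ℂ} (hg : DifferentiableAt ℂ g (f z))
    (hf : DifferentiableAt ℂ (fun w => conj (f w)) z) :
    DifferentiableAt ℂ (fun w => conj (g (f w))) z := by
  have hg' : DifferentiableAt ℂ (conj ∘ g ∘ conj) (conj (f z)) := hg.conj_conj
  simpa [Function.comp_def] using hg'.comp z hf

lemma exists_differentiableOn_mul_eq_add_conj_comp {M : ℝ} {c : ℂ} (hB : IsOpen B)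
    (hf : DifferentiableOn ℂ (fun z => conj (f z)) B) (hfB : MapsTo f B B)
    (hℓ : DifferentiableOn ℂ ℓ B) (hM : ∀ z ∈ B, ‖ℓ z‖ ≤ M) (hc : 1 < ‖c‖) :
    ∃ ζ : ℂ → ℂ, DifferentiableOn ℂ ζ B ∧ ∀ z ∈ B, c * ζ z = ℓ z + conj (ζ (f z)) := by
  have hc0 : c ≠ 0 := norm_pos_iff.1 (one_pos.trans hc)
  let g : ℕ → ℂ → ℂ := fun n => (fun h z => conj (h (f z)) / c)^[n] fun z => ℓ z / c
  have g_succ (n : ℕ) (z : ℂ) : g (n + 1) z = conj (g n (f z)) / c := by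
    simp only [g, Function.iterate_succ_apply']
  have g_diff (n : ℕ) : DifferentiableOn ℂ (g n) B := by
    induction n with
    | zero => exact hℓ.div_const c
    | succ n ih =>
      intro z hz
      refine (DifferentiableAt.congr_of_eventuallyEq ?_
        (Eventually.of_forall (g_succ n))).differentiableWithinAt
      exact (differentiableAt_conj_comp (ih.differentiableAt (hB.mem_nhds (hfB hz)))
        (hf.differentiableAt (hB.mem_nhds hz))).div_const c
  have g_norm (n : ℕ) : ∀ z ∈ B, ‖g n z‖ ≤ M / ‖c‖ * ‖c‖⁻¹ ^ n := by
    induction n with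
    | zero =>
      intro z hz
      simpa [g] using div_le_div_of_nonneg_right (hM z hz) (norm_nonneg c)
    | succ n ih =>
      intro z hz
      rw [g_succ, norm_div, RCLike.norm_conj, pow_succ, ← mul_assoc, ← div_eq_mul_inv]
      gcongr
      exact ih _ (hfB hz)
  have bound_summable : Summable fun n => M / ‖c‖ * ‖c‖⁻¹ ^ n :=
    (summable_geometric_of_lt_one (by positivity) (inv_lt_one_of_one_lt₀ hc)).mul_left _
  have g_summable (z : ℂ) (hz : z ∈ B) : Summable fun n => g n z :=
    .of_norm_bounded bound_summable fun n => g_norm n z hz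
  refine ⟨fun z => ∑' n, g n z,
    Complex.differentiableOn_tsum_of_summable_norm bound_summable g_diff hB g_norm, fun z hz => ?_⟩
  calc c * ∑' n, g n z = c * (g 0 z + ∑' n, g (n + 1) z) := by
        rw [(g_summable z hz).tsum_eq_zero_add]
    _ = ℓ z + conj (∑' n, g n (f z)) := by
        simp only [g_succ, tsum_div_const, Complex.conj_tsum]
        simp only [g, Function.iterate_zero, id]
        field_simp

lemma exists_analyticAt_exp_eventuallyEq (hq : AnalyticAt ℂ q z₀) (hq₀ : q z₀ ≠ 0) :
    ∃ ℓ : ℂ → ℂ, AnalyticAt ℂ ℓ z₀ ∧ ∀ᶠ z in 𝓝 z₀, Complex.exp (ℓ z) = q z := by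
  -- Dividing by `q z₀` moves the values of `q` near `1`, away from the branch cut of `log`.
  refine ⟨fun z => Complex.log (q z / q z₀) + Complex.log (q z₀),
    (hq.div_const.clog (by simp [hq₀])).add analyticAt_const, ?_⟩
  filter_upwards [hq.continuousAt.eventually_ne hq₀] with z hz
  rw [Complex.exp_add, Complex.exp_log (div_ne_zero hz hq₀), Complex.exp_log hq₀,
    div_mul_cancel₀ _ hq₀]

lemma eventually_dist_le_half_of_two_le_analyticOrderAt
    (hF : AnalyticAt ℂ (fun z => conj (f z - z₀)) z₀)
    (hord : 2 ≤ analyticOrderAt (fun z => conj (f z - z₀)) z₀) :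
    ∀ᶠ z in 𝓝 z₀, dist (f z) z₀ ≤ 1 / 2 * dist z z₀ := by
  obtain ⟨g, hg, hFg⟩ := (natCast_le_analyticOrderAt hF (n := 2)).1 hord
  have hsmall : Tendsto (fun z => ‖(z - z₀) * g z‖) (𝓝 z₀) (𝓝 0) := by
    have : ContinuousAt (fun z => ‖(z - z₀) * g z‖) z₀ :=
      ((continuousAt_id.sub continuousAt_const).mul hg.continuousAt).norm
    simpa using! this.tendsto
  filter_upwards [hFg, hsmall.eventually_le_const (show (0 : ℝ) < 1 / 2 by norm_num)] with z hz hle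
  calc dist (f z) z₀ = ‖conj (f z - z₀)‖ := by rw [RCLike.norm_conj, dist_eq_norm]
    _ = ‖(z - z₀) * g z‖ * dist z z₀ := by
        rw [hz, dist_eq_norm, ← norm_mul, smul_eq_mul]; ring_nf
    _ ≤ 1 / 2 * dist z z₀ := by gcongr

lemma exists_analyticAt_mul_eq_add_conj_comp {c : ℂ}
    (hf : AnalyticAt ℂ (fun z => conj (f z)) z₀)
    (hcontract : ∀ᶠ z in 𝓝 z₀, dist (f z) z₀ ≤ 1 / 2 * dist z z₀)
    (hℓ : AnalyticAt ℂ ℓ z₀) (hc : 1 < ‖c‖) :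
    ∃ ζ : ℂ → ℂ, AnalyticAt ℂ ζ z₀ ∧ ∀ᶠ z in 𝓝 z₀, c * ζ z = ℓ z + conj (ζ (f z)) := by
  obtain ⟨ε, hε, hball⟩ := Metric.eventually_nhds_iff_ball.1
    (hcontract.and (hf.eventually_analyticAt.and (hℓ.eventually_analyticAt.and
      (hℓ.continuousAt.norm.eventually_lt_const (lt_add_one ‖ℓ z₀‖)))))
  choose hcontract hf hℓ hℓ_lt using hball
  have hmapsTo : MapsTo f (ball z₀ ε) (ball z₀ ε) := fun z hz => by
    have := hcontract z hz
    rw [mem_ball] at hz ⊢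
    linarith [dist_nonneg (x := z) (y := z₀)]
  obtain ⟨ζ, hζ, hζ_eq⟩ := exists_differentiableOn_mul_eq_add_conj_comp isOpen_ball
    (fun z hz => (hf z hz).differentiableAt.differentiableWithinAt) hmapsTo
    (fun z hz => (hℓ z hz).differentiableAt.differentiableWithinAt)
    (fun z hz => (hℓ_lt z hz).le) hc
  exact ⟨ζ, hζ.analyticAt (ball_mem_nhds z₀ hε), mem_of_superset (ball_mem_nhds z₀ hε) hζ_eq⟩

lemma exists_boettcher_coordinate {m : ℕ} (hm : 2 ≤ m)
    (hF : AnalyticAt ℂ (fun z => conj (f z - z₀)) z₀)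
    (hord : analyticOrderAt (fun z => conj (f z - z₀)) z₀ = m) :
    ∃ ψ : ℂ → ℂ, AnalyticAt ℂ ψ z₀ ∧ ψ z₀ = 0 ∧ deriv ψ z₀ ≠ 0 ∧
      ∀ᶠ z in 𝓝 z₀, ψ (f z) = conj (ψ z) ^ m := by
  obtain ⟨q, hq, hq₀, hFq⟩ := hF.analyticOrderAt_eq_natCast.1 hord
  obtain ⟨ℓ, hℓ, hℓq⟩ := exists_analyticAt_exp_eventuallyEq hq hq₀
  have hf : AnalyticAt ℂ (fun z => conj (f z)) z₀ :=
    (hF.add (analyticAt_const (v := conj z₀))).congr (.of_forall fun z => by simp)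
  obtain ⟨ζ, hζ, hζ_eq⟩ := exists_analyticAt_mul_eq_add_conj_comp (c := m) hf
    (eventually_dist_le_half_of_two_le_analyticOrderAt hF (hord ▸ by exact_mod_cast hm)) hℓ
    (by simpa using (by exact_mod_cast hm : (1 : ℝ) < m))
  refine ⟨fun z => (z - z₀) * Complex.exp (ζ z),
    (analyticAt_id.sub analyticAt_const).mul hζ.cexp, by simp, ?_, ?_⟩
  · have hderiv := ((hasDerivAt_id z₀).sub_const z₀).mul hζ.differentiableAt.hasDerivAt.cexp
    simp only [id, sub_self, zero_mul, add_zero, one_mul] at hderiv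
    exact hderiv.deriv.trans_ne (Complex.exp_ne_zero _)
  · filter_upwards [hFq, hℓq, hζ_eq] with z hFq hℓq hζ_eq
    refine (starRingEnd ℂ).injective ?_
    calc conj ((f z - z₀) * Complex.exp (ζ (f z)))
        = (z - z₀) ^ m * Complex.exp (ℓ z + conj (ζ (f z))) := by
          rw [map_mul, hFq, ← Complex.exp_conj, Complex.exp_add, hℓq, smul_eq_mul, mul_assoc]
      _ = conj (conj ((z - z₀) * Complex.exp (ζ z)) ^ m) := by
          rw [← hζ_eq, Complex.exp_nat_mul, ← mul_pow, map_pow, Complex.conj_conj]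

lemma exists_boettcher_parametrization_germ {m : ℕ} (hm : 2 ≤ m)
    (hF : AnalyticAt ℂ (fun z => conj (f z - z₀)) z₀)
    (hord : analyticOrderAt (fun z => conj (f z - z₀)) z₀ = m) :
    ∃ φ : ℂ → ℂ, AnalyticAt ℂ φ 0 ∧ φ 0 = z₀ ∧ deriv φ 0 ≠ 0 ∧
      ∀ᶠ w in 𝓝 0, f (φ w) = φ (conj w ^ m) := by
  obtain ⟨ψ, hψ, hψ₀, hψ', hψf⟩ := exists_boettcher_coordinate hm hF hord
  have hf_lim : Tendsto f (𝓝 z₀) (𝓝 z₀) := by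
    have hF₀ : conj (f z₀ - z₀) = 0 :=
      hF.analyticOrderAt_ne_zero.1 (hord ▸ by exact_mod_cast (by omega : m ≠ 0))
    have := (Complex.continuous_conj.tendsto _).comp hF.continuousAt.tendsto
    rw [hF₀, map_zero] at this
    simpa [Function.comp_def] using this.add_const z₀
  have hψs := hψ.hasStrictDerivAt
  set φ := hψs.localInverse ψ (deriv ψ z₀) z₀ hψ'
  have hleft : ∀ᶠ z in 𝓝 z₀, φ (ψ z) = z := hψs.eventually_left_inverse hψ'
  have hright : ∀ᶠ w in 𝓝 0, ψ (φ w) = w := hψ₀ ▸ hψs.eventually_right_inverse hψ'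
  have hφ₀ : φ 0 = z₀ := hψ₀ ▸ hleft.self_of_nhds
  have hφs : HasStrictDerivAt φ (deriv ψ z₀)⁻¹ 0 := hψ₀ ▸ hψs.to_localInverse hψ'
  have hφ_an : AnalyticAt ℂ φ 0 := hψ₀ ▸ hψ.analyticAt_localInverse hψ'
  have hφ_lim : Tendsto φ (𝓝 0) (𝓝 z₀) := hφ₀ ▸ hφ_an.continuousAt.tendsto
  refine ⟨φ, hφ_an, hφ₀, hφs.hasDerivAt.deriv.trans_ne (inv_ne_zero hψ'), ?_⟩
  filter_upwards [hright, hφ_lim.eventually hψf, (hf_lim.comp hφ_lim).eventually hleft]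
    with w hw hfw hleft_w
  calc f (φ w) = φ (ψ (f (φ w))) := hleft_w.symm
    _ = φ (conj w ^ m) := by rw [hfw, hw]

end LocalCoordinate

section Lifting

variable {𝕜 : Type*} [NontriviallyNormedField 𝕜] [CompleteSpace 𝕜]

lemma differentiableAt_of_hasStrictDerivAt_comp {h G : 𝕜 → 𝕜} {h' s : 𝕜} (hG : ContinuousAt G s)
    (hh : HasStrictDerivAt h h' (G s)) (hh' : h' ≠ 0)
    (hcomp : DifferentiableAt 𝕜 (fun t => h (G t)) s) : DifferentiableAt 𝕜 G s := by
  have hinv : DifferentiableAt 𝕜 (hh.localInverse h h' (G s) hh') (h (G s)) :=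
    (hh.to_localInverse hh').hasDerivAt.differentiableAt
  refine (hinv.comp s hcomp).congr_of_eventuallyEq ?_
  filter_upwards [hG.eventually (hh.eventually_left_inverse hh')] with t ht using ht.symm

lemma eqOn_of_comp_eqOn_of_hasStrictDerivAt {h G H : 𝕜 → 𝕜} {h' a : 𝕜} {U : Set 𝕜}
    (hG : AnalyticOnNhd 𝕜 G U) (hH : AnalyticOnNhd 𝕜 H U) (hU : IsOpen U) (hUc : IsPreconnected U)
    (hGH : ∀ s ∈ U, h (G s) = h (H s)) (ha : a ∈ U) (hGHa : G a = H a)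
    (hh : HasStrictDerivAt h h' (G a)) (hh' : h' ≠ 0) : EqOn G H U := by
  refine hG.eqOn_of_preconnected_of_eventuallyEq hH hUc ha ?_
  have hinv := hh.eventually_left_inverse hh'
  have hH_lim : Tendsto H (𝓝 a) (𝓝 (G a)) := hGHa ▸ (hH a ha).continuousAt.tendsto
  filter_upwards [(hG a ha).continuousAt.eventually hinv, hH_lim.eventually hinv,
    hU.mem_nhds ha] with s hGs hHs hs
  rw [← hGs, hGH s hs, hHs]

lemma exists_continuousOn_lift_of_convex {E X Y : Type*} [NormedAddCommGroup E] [NormedSpace ℝ E]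
    [TopologicalSpace X] [TopologicalSpace Y] {f : X → Y} {A : Set X} {B T : Set Y}
    {hf : MapsTo f A B} (hcov : IsCoveringMapOn (hf.restrict f A B) {y | y.1 ∈ T})
    {U : Set E} (hU : IsOpen U) (hUc : Convex ℝ U) {g : E → Y} (hg : ContinuousOn g U)
    (hgB : MapsTo g U B) (hgT : MapsTo g U T) {a : E} (ha : a ∈ U) {e : X} (he : e ∈ A)
    (hea : f e = g a) :
    ∃ G : E → X, ContinuousOn G U ∧ MapsTo G U A ∧ (∀ s ∈ U, f (G s) = g s) ∧ G a = e := by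
  classical
  have : ContractibleSpace U := hUc.contractibleSpace ⟨a, ha⟩
  have := hU.locallyPathConnectedSpace
  obtain ⟨F, ⟨hFa, hFg⟩, -⟩ := hcov.existsUnique_continuousMap_lifts (A := U)
    ⟨hgB.restrict g U B, hg.mapsToRestrict hgB⟩
    (a₀ := ⟨a, ha⟩) (e₀ := ⟨e, he⟩) (Subtype.ext hea) (fun s => hgT s.2)
  set G : E → X := fun s => if hs : s ∈ U then F ⟨s, hs⟩ else e
  have G_eq {s : E} (hs : s ∈ U) : G s = F ⟨s, hs⟩ := dif_pos hs
  refine ⟨G, ?_, fun s hs => G_eq hs ▸ (F ⟨s, hs⟩).2, fun s hs => ?_, by rw [G_eq ha, hFa]⟩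
  · rw [continuousOn_iff_continuous_domRestrict]
    exact (continuous_subtype_val.comp F.continuous).congr fun s => (G_eq s.2).symm
  · rw [G_eq hs]
    exact congrArg Subtype.val (congrFun hFg ⟨s, hs⟩)

end Lifting

section ExpPreimage

variable {φ G : ℂ → ℂ} {r R : ℝ}

lemma exp_preimage_ball_zero (hR : 0 < R) :
    Complex.exp ⁻¹' ball 0 R = {s | s.re < Real.log R} := by
  ext s
  simp [Complex.norm_exp, Real.lt_log_iff_exp_lt hR]

lemma isOpen_exp_preimage_ball : IsOpen (Complex.exp ⁻¹' ball 0 R) :=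
  isOpen_ball.preimage Complex.continuous_exp

lemma convex_exp_preimage_ball (hR : 0 < R) : Convex ℝ (Complex.exp ⁻¹' ball 0 R) := by
  rw [exp_preimage_ball_zero hR]
  exact convex_halfSpace_re_lt _

lemma nonempty_exp_preimage_ball (hr : 0 < r) : (Complex.exp ⁻¹' ball 0 r).Nonempty :=
  ⟨(Real.log (r / 2) : ℝ), by
    simp [Complex.norm_exp, Real.exp_log (half_pos hr), hr]⟩

lemma eq_of_exp_eq_of_eqOn_comp_exp (hr : 0 < r) (hrR : r ≤ R)
    (hG : DifferentiableOn ℂ G (Complex.exp ⁻¹' ball 0 R))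
    (hGφ : EqOn G (φ ∘ Complex.exp) (Complex.exp ⁻¹' ball 0 r)) {s t : ℂ}
    (hs : s ∈ Complex.exp ⁻¹' ball 0 R) (hst : Complex.exp s = Complex.exp t) : G s = G t := by
  have exp_add (u : ℂ) : Complex.exp (u + (t - s)) = Complex.exp u := by
    rw [Complex.exp_add, Complex.exp_sub, hst, div_self (Complex.exp_ne_zero t), mul_one]
  have hmaps (ρ : ℝ) : MapsTo (· + (t - s)) (Complex.exp ⁻¹' ball 0 ρ) (Complex.exp ⁻¹' ball 0 ρ) :=
    fun u hu => by simpa only [mem_preimage, exp_add] using hu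
  obtain ⟨a, ha⟩ := nonempty_exp_preimage_ball hr
  have htranslate : EqOn G (fun u => G (u + (t - s))) (Complex.exp ⁻¹' ball 0 R) := by
    refine (hG.analyticOnNhd isOpen_exp_preimage_ball).eqOn_of_preconnected_of_eventuallyEq
      ((hG.comp (by fun_prop) (hmaps R)).analyticOnNhd isOpen_exp_preimage_ball)
      (convex_exp_preimage_ball (hr.trans_le hrR)).isPreconnected
      (preimage_mono (ball_subset_ball hrR) ha) ?_
    filter_upwards [isOpen_exp_preimage_ball.mem_nhds ha] with u hu
    rw [hGφ hu, Function.comp_apply, hGφ (hmaps r hu), Function.comp_apply, exp_add]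
  simpa using htranslate hs

lemma exists_differentiableOn_ball_comp_exp_eq (hr : 0 < r) (hrR : r ≤ R)
    (hφ : DifferentiableOn ℂ φ (ball 0 r))
    (hG : DifferentiableOn ℂ G (Complex.exp ⁻¹' ball 0 R))
    (hGφ : EqOn G (φ ∘ Complex.exp) (Complex.exp ⁻¹' ball 0 r)) :
    ∃ φ' : ℂ → ℂ, DifferentiableOn ℂ φ' (ball 0 R) ∧ EqOn φ' φ (ball 0 r) ∧
      ∀ s ∈ Complex.exp ⁻¹' ball 0 R, φ' (Complex.exp s) = G s := by
  classical
  let φ' : ℂ → ℂ := fun w => if w ∈ ball 0 r then φ w else G (Complex.log w)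
  have hφ'φ : EqOn φ' φ (ball 0 r) := fun w hw => if_pos hw
  have hφ'G : ∀ s ∈ Complex.exp ⁻¹' ball 0 R, φ' (Complex.exp s) = G s := fun s hs => by
    by_cases hsr : Complex.exp s ∈ ball 0 r
    · rw [hφ'φ hsr, hGφ hsr, Function.comp_apply]
    · exact (if_neg hsr).trans (eq_of_exp_eq_of_eqOn_comp_exp hr hrR hG hGφ hs
        (Complex.exp_log (Complex.exp_ne_zero s)).symm).symm
  refine ⟨φ', fun w hw => DifferentiableAt.differentiableWithinAt ?_, hφ'φ, hφ'G⟩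
  rcases eq_or_ne w 0 with rfl | hw₀
  · have hball : ball (0 : ℂ) r ∈ 𝓝 0 := ball_mem_nhds 0 hr
    exact (hφ.differentiableAt hball).congr_of_eventuallyEq (hφ'φ.eventuallyEq_of_mem hball)
  · obtain ⟨s, rfl⟩ : ∃ s, Complex.exp s = w := ⟨_, Complex.exp_log hw₀⟩
    have hnhds := isOpen_exp_preimage_ball.mem_nhds (show s ∈ Complex.exp ⁻¹' ball 0 R from hw)
    have hcomp : AnalyticAt ℂ (φ' ∘ Complex.exp) s :=
      (hG.analyticAt hnhds).congr (mem_of_superset hnhds fun t ht => (hφ'G t ht).symm)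
    exact ((analyticAt_comp_iff_of_deriv_ne_zero analyticAt_cexp
      (by simp [Complex.exp_ne_zero])).1 hcomp).differentiableAt

end ExpPreimage

/-- An antiholomorphic self-map `f` of `A` without critical points in `A` other than `z₀`, whose
restriction `A → A` is a covering over `A \ {z₀}`. Antiholomorphy is encoded as analyticity of
`z ↦ conj (f z)`. The notion isolates what the construction of the Böttcher parametrization needs
to know about an anti-polynomial on its immediate basin. -/
structure IsUnicriticalCovering (f : ℂ → ℂ) (z₀ : ℂ) (A : Set ℂ) : Prop where
  mapsTo : MapsTo f A A
  analyticOnNhd : AnalyticOnNhd ℂ (fun z => conj (f z)) A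
  deriv_ne_zero : ∀ z ∈ A, z ≠ z₀ → deriv (fun z => conj (f z)) z ≠ 0
  isCoveringMapOn : IsCoveringMapOn (mapsTo.restrict f A A) {x | x.1 ∈ ({z₀}ᶜ : Set ℂ)}

/-- An inverse Böttcher coordinate on the disk of radius `r`: an injective holomorphic map into `A`
sending `0` to `z₀` and conjugating `w ↦ (conj w) ^ m` to `f`. -/
structure IsBoettcherParametrization (f : ℂ → ℂ) (z₀ : ℂ) (A : Set ℂ) (m : ℕ) (φ : ℂ → ℂ)
    (r : ℝ) : Prop where
  differentiableOn : DifferentiableOn ℂ φ (ball 0 r)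
  injOn : InjOn φ (ball 0 r)
  mapsTo : MapsTo φ (ball 0 r) A
  apply_zero : φ 0 = z₀
  map_conj_pow : ∀ w ∈ ball 0 r, f (φ w) = φ (conj w ^ m)

section Extension

variable {f φ G H : ℂ → ℂ} {z₀ a : ℂ} {A U : Set ℂ} {m : ℕ} {r R : ℝ}

namespace IsUnicriticalCovering

lemma hasStrictDerivAt (hf : IsUnicriticalCovering f z₀ A) {z : ℂ} (hz : z ∈ A) :
    HasStrictDerivAt (fun z => conj (f z)) (deriv (fun z => conj (f z)) z) z :=
  (hf.analyticOnNhd z hz).hasStrictDerivAt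

lemma differentiableOn_of_continuousOn (hf : IsUnicriticalCovering f z₀ A) (hU : IsOpen U)
    (hG : ContinuousOn G U) (hGA : MapsTo G U A) (hG₀ : ∀ s ∈ U, G s ≠ z₀)
    (hfG : DifferentiableOn ℂ (fun s => conj (f (G s))) U) : DifferentiableOn ℂ G U :=
  fun s hs => (differentiableAt_of_hasStrictDerivAt_comp (hG.continuousAt (hU.mem_nhds hs))
    (hf.hasStrictDerivAt (hGA hs)) (hf.deriv_ne_zero _ (hGA hs) (hG₀ s hs))
    (hfG.differentiableAt (hU.mem_nhds hs))).differentiableWithinAt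

lemma eqOn_of_comp_eqOn (hf : IsUnicriticalCovering f z₀ A) (hU : IsOpen U)
    (hUc : IsPreconnected U) (hG : DifferentiableOn ℂ G U) (hH : DifferentiableOn ℂ H U)
    (hGH : ∀ s ∈ U, f (G s) = f (H s)) (ha : a ∈ U) (hGHa : G a = H a) (hGA : G a ∈ A)
    (hG₀ : G a ≠ z₀) : EqOn G H U :=
  eqOn_of_comp_eqOn_of_hasStrictDerivAt (hG.analyticOnNhd hU) (hH.analyticOnNhd hU) hU hUc
    (fun s hs => by rw [hGH s hs]) ha hGHa (hf.hasStrictDerivAt hGA)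
    (hf.deriv_ne_zero _ hGA hG₀)

end IsUnicriticalCovering

lemma conj_pow_mem_ball (hm : m ≠ 0) {w : ℂ} (hw : w ∈ ball (0 : ℂ) r) :
    conj w ^ m ∈ ball (0 : ℂ) (r ^ m) := by
  rw [mem_ball_zero_iff] at hw ⊢
  rw [norm_pow, RCLike.norm_conj]
  exact pow_lt_pow_left₀ hw (norm_nonneg w) hm

lemma differentiableOn_conj_comp_conj_pow (hm : m ≠ 0)
    (hφ : DifferentiableOn ℂ φ (ball 0 (r ^ m))) :
    DifferentiableOn ℂ (fun w => conj (φ (conj w ^ m))) (ball 0 r) := fun w hw => by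
  refine (differentiableAt_conj_comp (f := fun w => conj w ^ m) (hφ.differentiableAt
    (isOpen_ball.mem_nhds (conj_pow_mem_ball hm hw))) ?_).differentiableWithinAt
  simp only [map_pow, Complex.conj_conj]
  fun_prop

namespace IsBoettcherParametrization

lemma mono (h : IsBoettcherParametrization f z₀ A m φ R) (hrR : r ≤ R) :
    IsBoettcherParametrization f z₀ A m φ r where
  differentiableOn := h.differentiableOn.mono (ball_subset_ball hrR)
  injOn := h.injOn.mono (ball_subset_ball hrR)
  mapsTo := h.mapsTo.mono_left (ball_subset_ball hrR)
  apply_zero := h.apply_zero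
  map_conj_pow w hw := h.map_conj_pow w (ball_subset_ball hrR hw)

lemma apply_ne (h : IsBoettcherParametrization f z₀ A m φ r) {w : ℂ} (hw : w ∈ ball 0 r)
    (hw₀ : w ≠ 0) : φ w ≠ z₀ := fun hφw =>
  hw₀ (h.injOn hw (mem_ball_self (pos_of_mem_ball hw)) (hφw.trans h.apply_zero.symm))

lemma map_base (h : IsBoettcherParametrization f z₀ A m φ r) (hm : m ≠ 0) (hr : 0 < r) :
    f z₀ = z₀ := by
  simpa [h.apply_zero, hm] using h.map_conj_pow 0 (mem_ball_self hr)

lemma exists_lift (h : IsBoettcherParametrization f z₀ A m φ (R ^ m))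
    (hf : IsUnicriticalCovering f z₀ A) (hm : m ≠ 0) (hR : 0 < R) (hR₁ : R ≤ 1) :
    ∃ G : ℂ → ℂ, DifferentiableOn ℂ G (Complex.exp ⁻¹' ball 0 R) ∧
      MapsTo G (Complex.exp ⁻¹' ball 0 R) A ∧
      (∀ s ∈ Complex.exp ⁻¹' ball 0 R, f (G s) = φ (conj (Complex.exp s) ^ m)) ∧
      EqOn G (φ ∘ Complex.exp) (Complex.exp ⁻¹' ball 0 (R ^ m)) := by
  have hRm : 0 < R ^ m := pow_pos hR m
  have hsub : Complex.exp ⁻¹' ball 0 (R ^ m) ⊆ Complex.exp ⁻¹' ball 0 R :=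
    preimage_mono (ball_subset_ball (pow_le_of_le_one hR.le hR₁ hm))
  have hpow : MapsTo (fun s => conj (Complex.exp s) ^ m) (Complex.exp ⁻¹' ball 0 R)
    (ball 0 (R ^ m)) := fun s hs => conj_pow_mem_ball hm hs
  have hpow_ne : ∀ s ∈ Complex.exp ⁻¹' ball 0 R, φ (conj (Complex.exp s) ^ m) ≠ z₀ :=
    fun s hs => h.apply_ne (hpow hs) (by simp [Complex.exp_ne_zero])
  obtain ⟨a, ha⟩ := nonempty_exp_preimage_ball hRm
  obtain ⟨G, hG, hGA, hfG, hGa⟩ := exists_continuousOn_lift_of_convex hf.isCoveringMapOn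
    isOpen_exp_preimage_ball (convex_exp_preimage_ball hR)
    (g := fun s => φ (conj (Complex.exp s) ^ m))
    (h.differentiableOn.continuousOn.comp (by fun_prop) hpow) (h.mapsTo.comp hpow) hpow_ne
    (hsub ha) (h.mapsTo ha) (h.map_conj_pow _ ha)
  have hG₀ : ∀ s ∈ Complex.exp ⁻¹' ball 0 R, G s ≠ z₀ := fun s hs hGs =>
    hpow_ne s hs (by rw [← hfG s hs, hGs, h.map_base hm hRm])
  have hfG_diff : DifferentiableOn ℂ (fun s => conj (f (G s))) (Complex.exp ⁻¹' ball 0 R) :=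
    ((differentiableOn_conj_comp_conj_pow hm h.differentiableOn).comp
      Complex.differentiable_exp.differentiableOn fun _ => id).congr
      fun s hs => congrArg (starRingEnd ℂ) (hfG s hs)
  have hG_diff := hf.differentiableOn_of_continuousOn isOpen_exp_preimage_ball hG hGA hG₀ hfG_diff
  refine ⟨G, hG_diff, hGA, hfG, hf.eqOn_of_comp_eqOn isOpen_exp_preimage_ball
    (convex_exp_preimage_ball hRm).isPreconnected (hG_diff.mono hsub)
    (h.differentiableOn.comp Complex.differentiable_exp.differentiableOn fun _ => id)
    (fun s hs => (hfG s (hsub hs)).trans (h.map_conj_pow _ hs).symm) ha hGa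
    (hGA (hsub ha)) (hG₀ a (hsub ha))⟩

end IsBoettcherParametrization

namespace IsUnicriticalCovering

lemma eq_one_of_apply_mul_eq (hf : IsUnicriticalCovering f z₀ A) (hm : m ≠ 0) (hR₁ : R ≤ 1)
    (hφ : DifferentiableOn ℂ φ (ball 0 R)) (hφf : ∀ w ∈ ball 0 R, f (φ w) = φ (conj w ^ m))
    (hinj : InjOn φ (ball 0 (R ^ m))) {ω : ℂ} (hω : ω ^ m = 1) (ha : a ∈ ball 0 R)
    (haω : φ a = φ (ω * a)) (hφa : φ a ∈ A) (hφa₀ : φ a ≠ z₀) : ω = 1 := by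
  have hR : 0 < R := pos_of_mem_ball ha
  have hmaps (ρ : ℝ) : MapsTo (ω * ·) (ball 0 ρ) (ball 0 ρ) := fun w hw => by
    simpa [Complex.norm_eq_one_of_pow_eq_one hω hm] using hw
  have hrot : EqOn φ (fun w => φ (ω * w)) (ball 0 R) :=
    hf.eqOn_of_comp_eqOn isOpen_ball (convex_ball 0 R).isPreconnected hφ
      (hφ.comp (by fun_prop) (hmaps R))
      (fun w hw => by
        rw [hφf w hw, hφf _ (hmaps R hw), ← map_pow, ← map_pow, mul_pow, hω, one_mul])
      ha haω hφa hφa₀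
  obtain ⟨c, hc, hc₀⟩ : ∃ c ∈ ball (0 : ℂ) (R ^ m), c ≠ 0 := by
    obtain ⟨s, hs⟩ := nonempty_exp_preimage_ball (pow_pos hR m)
    exact ⟨_, hs, Complex.exp_ne_zero s⟩
  have hωc : c = ω * c :=
    hinj hc (hmaps _ hc) (hrot (ball_subset_ball (pow_le_of_le_one hR.le hR₁ hm) hc))
  exact (mul_eq_right₀ hc₀).1 hωc.symm

lemma injOn_of_injOn_pow (hf : IsUnicriticalCovering f z₀ A) (hm : m ≠ 0) (hR₁ : R ≤ 1)
    (hφ : DifferentiableOn ℂ φ (ball 0 R)) (hφA : MapsTo φ (ball 0 R) A) (hφ₀ : φ 0 = z₀)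
    (hφf : ∀ w ∈ ball 0 R, f (φ w) = φ (conj w ^ m)) (hinj : InjOn φ (ball 0 (R ^ m))) :
    InjOn φ (ball 0 R) := by
  have pow_eq_pow {a b : ℂ} (ha : a ∈ ball 0 R) (hb : b ∈ ball 0 R) (hab : φ a = φ b) :
      a ^ m = b ^ m := by
    have := hinj (conj_pow_mem_ball hm ha) (conj_pow_mem_ball hm hb)
      (by rw [← hφf a ha, ← hφf b hb, hab])
    simpa only [← map_pow, (starRingEnd ℂ).injective.eq_iff] using this
  have eq_zero {a : ℂ} (ha : a ∈ ball 0 R) (hφa : φ a = z₀) : a = 0 := by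
    have := pow_eq_pow ha (mem_ball_self (pos_of_mem_ball ha)) (hφa.trans hφ₀.symm)
    rwa [zero_pow hm, pow_eq_zero_iff hm] at this
  intro a ha b hb hab
  rcases eq_or_ne a 0 with rfl | ha₀
  · exact (eq_zero hb (hab.symm.trans hφ₀)).symm
  have hba : b / a * a = b := div_mul_cancel₀ b ha₀
  have hω : b / a = 1 := hf.eq_one_of_apply_mul_eq hm hR₁ hφ hφf hinj
    (by rw [div_pow, pow_eq_pow hb ha hab.symm, div_self (pow_ne_zero m ha₀)]) ha
    (by rw [hba, hab]) (hφA ha) (fun h => ha₀ (eq_zero ha h))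
  exact ((div_eq_one_iff_eq ha₀).1 hω).symm

end IsUnicriticalCovering

namespace IsBoettcherParametrization

lemma exists_extension (h : IsBoettcherParametrization f z₀ A m φ (R ^ m))
    (hf : IsUnicriticalCovering f z₀ A) (hm : m ≠ 0) (hR : 0 < R) (hR₁ : R ≤ 1) :
    ∃ φ' : ℂ → ℂ, IsBoettcherParametrization f z₀ A m φ' R ∧ φ' =ᶠ[𝓝 0] φ := by
  have hRm : 0 < R ^ m := pow_pos hR m
  obtain ⟨G, hG, hGA, hfG, hGφ⟩ := h.exists_lift hf hm hR hR₁
  obtain ⟨φ', hφ', hφ'φ, hφ'G⟩ := exists_differentiableOn_ball_comp_exp_eq hRm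
    (pow_le_of_le_one hR.le hR₁ hm) h.differentiableOn hG hGφ
  have hφ'₀ : φ' 0 = z₀ := (hφ'φ (mem_ball_self hRm)).trans h.apply_zero
  have hφ'A : MapsTo φ' (ball 0 R) A := fun w hw => by
    rcases eq_or_ne w 0 with rfl | hw₀
    · rw [hφ'₀, ← h.apply_zero]
      exact h.mapsTo (mem_ball_self hRm)
    · rw [← Complex.exp_log hw₀] at hw ⊢
      exact hφ'G _ hw ▸ hGA hw
  have hφ'f : ∀ w ∈ ball 0 R, f (φ' w) = φ' (conj w ^ m) := fun w hw => by
    rcases eq_or_ne w 0 with rfl | hw₀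
    · rw [map_zero, zero_pow hm, hφ'₀, h.map_base hm hRm]
    · rw [← Complex.exp_log hw₀] at hw ⊢
      rw [hφ'G _ hw, hfG _ hw, hφ'φ (conj_pow_mem_ball hm hw)]
  exact ⟨φ', ⟨hφ', hf.injOn_of_injOn_pow hm hR₁ hφ' hφ'A hφ'₀ hφ'f (h.injOn.congr hφ'φ.symm),
    hφ'A, hφ'₀, hφ'f⟩, hφ'φ.eventuallyEq_of_mem (ball_mem_nhds 0 hRm)⟩

end IsBoettcherParametrization

end Extension

section Globalization

variable {f φ φ₀ : ℂ → ℂ} {z₀ z : ℂ} {A U : Set ℂ} {m : ℕ} {r R ρ : ℝ}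

lemma exists_eqOn_ball_of_eventuallyEq {F : ℝ → ℂ → ℂ}
    (hF : ∀ R ∈ Ioo 0 ρ, DifferentiableOn ℂ (F R) (ball 0 R))
    (hFφ₀ : ∀ R ∈ Ioo 0 ρ, F R =ᶠ[𝓝 0] φ₀) :
    ∃ φ : ℂ → ℂ, ∀ R ∈ Ioo 0 ρ, EqOn φ (F R) (ball 0 R) := by
  have hcompat {R S : ℝ} (hR : R ∈ Ioo 0 ρ) (hS : S ∈ Ioo 0 ρ) (hRS : R ≤ S) :
      EqOn (F R) (F S) (ball 0 R) :=
    ((hF R hR).analyticOnNhd isOpen_ball).eqOn_of_preconnected_of_eventuallyEq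
      (((hF S hS).mono (ball_subset_ball hRS)).analyticOnNhd isOpen_ball)
      (convex_ball 0 R).isPreconnected (mem_ball_self hR.1) ((hFφ₀ R hR).trans (hFφ₀ S hS).symm)
  refine ⟨fun w => F ((‖w‖ + ρ) / 2) w, fun R hR w hw => ?_⟩
  rw [mem_ball_zero_iff] at hw
  have hmid : (‖w‖ + ρ) / 2 ∈ Ioo 0 ρ :=
    ⟨by linarith [norm_nonneg w, hR.1, hR.2], by linarith [hR.2]⟩
  rcases le_total R ((‖w‖ + ρ) / 2) with hle | hle
  · exact (hcompat hR hmid hle (mem_ball_zero_iff.2 hw)).symm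
  · exact hcompat hmid hR hle (mem_ball_zero_iff.2 (by linarith [hR.2]))

lemma isOpen_image_of_differentiableOn_of_injOn (hU : IsOpen U) (hφ : DifferentiableOn ℂ φ U)
    (hinj : InjOn φ U) : IsOpen (φ '' U) := by
  rw [isOpen_iff_mem_nhds]
  rintro _ ⟨w, hw, rfl⟩
  have hUw : U ∈ 𝓝 w := hU.mem_nhds hw
  rcases (hφ.analyticAt hUw).eventually_constant_or_nhds_le_map_nhds with hconst | hopen
  · have hconst' : ∀ᶠ v in 𝓝[≠] w, v ∈ U ∧ φ v = φ w :=
      Eventually.filter_mono nhdsWithin_le_nhds ((eventually_mem_set.2 hUw).and hconst)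
    obtain ⟨v, ⟨hv, hvw⟩, hne⟩ := (hconst'.and self_mem_nhdsWithin).exists
    exact absurd (hinj hv hw hvw) hne
  · exact hopen (image_mem_map hUw)

lemma simplyConnectedSpace_image_of_convex (hU : IsOpen U) (hUc : Convex ℝ U) (hUn : U.Nonempty)
    (hφ : DifferentiableOn ℂ φ U) (hinj : InjOn φ U) : SimplyConnectedSpace (φ '' U) := by
  have hemb : IsOpenEmbedding (U.domRestrict φ) := by
    refine .of_continuous_injective_isOpenMap
      (continuousOn_iff_continuous_domRestrict.1 hφ.continuousOn) hinj.injective fun s hs => ?_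
    have hsU : Subtype.val '' s ⊆ U := by simp
    rw [show U.domRestrict φ '' s = φ '' (Subtype.val '' s) by rw [image_image]; rfl]
    exact isOpen_image_of_differentiableOn_of_injOn (hU.isOpenMap_subtype_val s hs)
      (hφ.mono hsU) (hinj.mono hsU)
  have : ContractibleSpace U := hUc.contractibleSpace hUn
  rw [← range_domRestrict]
  exact hemb.isEmbedding.toHomeomorph.symm.toHomotopyEquiv.simplyConnectedSpace

lemma norm_iterate_conj_pow (m n : ℕ) (w : ℂ) :
    ‖(fun v => conj v ^ m)^[n] w‖ = ‖w‖ ^ m ^ n := by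
  induction n with
  | zero => simp
  | succ n ih =>
    rw [Function.iterate_succ_apply', norm_pow, RCLike.norm_conj, ih, ← pow_mul, pow_succ]

namespace IsBoettcherParametrization

lemma congr (h : IsBoettcherParametrization f z₀ A m φ₀ r) (hm : m ≠ 0) (hr : 0 < r) (hr₁ : r ≤ 1)
    (hφ : EqOn φ φ₀ (ball 0 r)) : IsBoettcherParametrization f z₀ A m φ r where
  differentiableOn := h.differentiableOn.congr hφ
  injOn := h.injOn.congr hφ.symm
  mapsTo := h.mapsTo.congr hφ.symm
  apply_zero := (hφ (mem_ball_self hr)).trans h.apply_zero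
  map_conj_pow w hw := by
    rw [hφ hw, h.map_conj_pow w hw,
      hφ (ball_subset_ball (pow_le_of_le_one hr.le hr₁ hm) (conj_pow_mem_ball hm hw))]

lemma of_forall_lt (hρ : 0 < ρ) (h : ∀ R ∈ Ioo 0 ρ, IsBoettcherParametrization f z₀ A m φ R) :
    IsBoettcherParametrization f z₀ A m φ ρ := by
  have exists_radius {a b : ℂ} (ha : a ∈ ball 0 ρ) (hb : b ∈ ball 0 ρ) :
      ∃ R ∈ Ioo 0 ρ, a ∈ ball 0 R ∧ b ∈ ball 0 R := by
    simp only [mem_ball_zero_iff] at ha hb ⊢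
    obtain ⟨R, hR, hRρ⟩ := exists_between (max_lt ha hb)
    obtain ⟨haR, hbR⟩ := max_lt_iff.1 hR
    exact ⟨R, ⟨(norm_nonneg a).trans_lt haR, hRρ⟩, haR, hbR⟩
  refine ⟨fun w hw => ?_, fun a ha b hb hab => ?_, fun w hw => ?_,
    (h (ρ / 2) ⟨half_pos hρ, half_lt_self hρ⟩).apply_zero, fun w hw => ?_⟩
  · obtain ⟨R, hR, hwR, -⟩ := exists_radius hw hw
    exact ((h R hR).differentiableOn.differentiableAt
      (isOpen_ball.mem_nhds hwR)).differentiableWithinAt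
  · obtain ⟨R, hR, haR, hbR⟩ := exists_radius ha hb
    exact (h R hR).injOn haR hbR hab
  · obtain ⟨R, hR, hwR, -⟩ := exists_radius hw hw
    exact (h R hR).mapsTo hwR
  · obtain ⟨R, hR, hwR, -⟩ := exists_radius hw hw
    exact (h R hR).map_conj_pow w hwR

lemma exists_of_pow_le (h : IsBoettcherParametrization f z₀ A m φ₀ r)
    (hf : IsUnicriticalCovering f z₀ A) (hm : m ≠ 0) (n : ℕ) (hR : 0 < R) (hR₁ : R ≤ 1)
    (hRr : R ^ m ^ n ≤ r) :
    ∃ φ : ℂ → ℂ, IsBoettcherParametrization f z₀ A m φ R ∧ φ =ᶠ[𝓝 0] φ₀ := by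
  induction n generalizing R with
  | zero => exact ⟨φ₀, h.mono (by simpa using hRr), .rfl⟩
  | succ n ih =>
    obtain ⟨φ, hφ, hφφ₀⟩ := ih (pow_pos hR m) (pow_le_one₀ hR.le hR₁)
      (by rwa [← pow_mul, ← pow_succ'])
    obtain ⟨φ', hφ', hφ'φ⟩ := hφ.exists_extension hf hm hR hR₁
    exact ⟨φ', hφ', hφ'φ.trans hφφ₀⟩

lemma exists_unit_ball (h : IsBoettcherParametrization f z₀ A m φ₀ r)
    (hf : IsUnicriticalCovering f z₀ A) (hm : 2 ≤ m) (hr : 0 < r) :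
    ∃ φ : ℂ → ℂ, IsBoettcherParametrization f z₀ A m φ 1 := by
  have hm₀ : m ≠ 0 := by omega
  have exists_germ (R : ℝ) (hR : R ∈ Ioo 0 1) :
      ∃ φ : ℂ → ℂ, IsBoettcherParametrization f z₀ A m φ R ∧ φ =ᶠ[𝓝 0] φ₀ := by
    obtain ⟨n, hn⟩ := exists_pow_lt_of_lt_one hr hR.2
    exact h.exists_of_pow_le hf hm₀ n hR.1 hR.2.le
      ((pow_le_pow_of_le_one hR.1.le hR.2.le (Nat.lt_pow_self hm).le).trans hn.le)
  choose! F hF hFφ₀ using exists_germ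
  obtain ⟨φ, hφ⟩ := exists_eqOn_ball_of_eventuallyEq (fun R hR => (hF R hR).differentiableOn) hFφ₀
  exact ⟨φ, of_forall_lt one_pos fun R hR => (hF R hR).congr hm₀ hR.1 hR.2.le (hφ R hR)⟩

lemma iterate_apply (h : IsBoettcherParametrization f z₀ A m φ r) (hm : m ≠ 0) (hr₁ : r ≤ 1)
    (n : ℕ) {w : ℂ} (hw : w ∈ ball 0 r) :
    f^[n] (φ w) = φ ((fun v => conj v ^ m)^[n] w) := by
  have hmaps : MapsTo (fun v : ℂ => conj v ^ m) (ball 0 r) (ball 0 r) := fun v hv =>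
    ball_subset_ball (pow_le_of_le_one (pos_of_mem_ball hv).le hr₁ hm) (conj_pow_mem_ball hm hv)
  induction n with
  | zero => rfl
  | succ n ih =>
    rw [Function.iterate_succ_apply', Function.iterate_succ_apply', ih,
      h.map_conj_pow _ (hmaps.iterate n hw)]

lemma mem_ball_of_iterate_mem_image (h : IsBoettcherParametrization f z₀ A m φ 1) (hm : m ≠ 0)
    (hr₀ : 0 ≤ r) (hr₁ : r ≤ 1) {n : ℕ} {w : ℂ} (hw : w ∈ ball 0 1)
    (hfw : f^[n] (φ w) ∈ φ '' ball 0 (r ^ m ^ n)) : w ∈ ball 0 r := by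
  obtain ⟨v, hv, hvw⟩ := hfw
  have hv_eq : v = (fun v => conj v ^ m)^[n] w :=
    h.injOn (ball_subset_ball (pow_le_one₀ hr₀ hr₁) hv)
      (by
        rw [mem_ball_zero_iff] at hw ⊢
        rw [norm_iterate_conj_pow]
        exact pow_lt_one₀ (norm_nonneg w) hw (pow_ne_zero n hm))
      (hvw.trans (h.iterate_apply hm le_rfl n hw))
  rw [mem_ball_zero_iff, hv_eq, norm_iterate_conj_pow] at hv
  exact mem_ball_zero_iff.2 (lt_of_pow_lt_pow_left₀ _ hr₀ hv)

lemma mem_image_of_mem_closure (h : IsBoettcherParametrization f z₀ A m φ 1) (hm : m ≠ 0)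
    (hf : Continuous f) (hz : Tendsto (fun n => f^[n] z) atTop (𝓝 z₀))
    (hzφ : z ∈ closure (φ '' ball 0 1)) : z ∈ φ '' ball 0 1 := by
  have hhalf : ball (0 : ℂ) (1 / 2) ⊆ ball 0 1 := ball_subset_ball (by norm_num)
  have hV : IsOpen (φ '' ball 0 (1 / 2)) := isOpen_image_of_differentiableOn_of_injOn isOpen_ball
    (h.differentiableOn.mono hhalf) (h.injOn.mono hhalf)
  have hz₀V : z₀ ∈ φ '' ball 0 (1 / 2) := ⟨0, mem_ball_self one_half_pos, h.apply_zero⟩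
  obtain ⟨n, hn⟩ := (hz.eventually (hV.mem_nhds hz₀V)).exists
  obtain ⟨ρ, hρ₀, hρ₁, hρ⟩ : ∃ ρ : ℝ, 0 ≤ ρ ∧ ρ < 1 ∧ ρ ^ m ^ n = 1 / 2 :=
    ⟨(1 / 2) ^ ((m ^ n : ℕ) : ℝ)⁻¹, by positivity,
      Real.rpow_lt_one (by norm_num) (by norm_num) (by positivity),
      Real.rpow_inv_natCast_pow (by norm_num) (pow_ne_zero n hm)⟩
  have hρ_sub : closedBall (0 : ℂ) ρ ⊆ ball 0 1 := closedBall_subset_ball hρ₁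
  have hsub : f^[n] ⁻¹' (φ '' ball 0 (1 / 2)) ∩ φ '' ball 0 1 ⊆ φ '' closedBall 0 ρ := by
    rintro _ ⟨hw', w, hw, rfl⟩
    exact mem_image_of_mem φ (ball_subset_closedBall
      (h.mem_ball_of_iterate_mem_image hm hρ₀ hρ₁.le hw (by rwa [hρ])))
  have hclosed : IsClosed (φ '' closedBall 0 ρ) := ((isCompact_closedBall 0 ρ).image_of_continuousOn
    (h.differentiableOn.continuousOn.mono hρ_sub)).isClosed
  have hz_closure : z ∈ closure (f^[n] ⁻¹' (φ '' ball 0 (1 / 2)) ∩ φ '' ball 0 1) :=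
    (hV.preimage (hf.iterate n)).inter_closure ⟨hn, hzφ⟩
  exact image_mono hρ_sub (closure_minimal hsub hclosed hz_closure)

lemma image_ball_eq (h : IsBoettcherParametrization f z₀ A m φ 1) (hm : m ≠ 0)
    (hf : Continuous f) (hA : IsPreconnected A)
    (hAf : ∀ z ∈ A, Tendsto (fun n => f^[n] z) atTop (𝓝 z₀)) : φ '' ball 0 1 = A := by
  refine h.mapsTo.image_subset.antisymm (hA.subset_of_closure_inter_subset
    (isOpen_image_of_differentiableOn_of_injOn isOpen_ball h.differentiableOn h.injOn) ?_
    fun z ⟨hzφ, hzA⟩ => h.mem_image_of_mem_closure hm hf (hAf z hzA) hzφ)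
  exact ⟨φ 0, h.mapsTo (mem_ball_self one_pos), mem_image_of_mem φ (mem_ball_self one_pos)⟩

end IsBoettcherParametrization

lemma exists_isBoettcherParametrization_of_germ (hA : A ∈ 𝓝 z₀) (hφ : AnalyticAt ℂ φ 0)
    (hφ₀ : φ 0 = z₀) (hφ' : deriv φ 0 ≠ 0) (hφf : ∀ᶠ w in 𝓝 0, f (φ w) = φ (conj w ^ m)) :
    ∃ r > 0, IsBoettcherParametrization f z₀ A m φ r := by
  have hleft := hφ.hasStrictDerivAt.eventually_left_inverse hφ'
  have hφA : ∀ᶠ w in 𝓝 0, φ w ∈ A := hφ.continuousAt.eventually_mem (hφ₀ ▸ hA)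
  obtain ⟨r, hr, hball⟩ := Metric.eventually_nhds_iff_ball.1
    (hφ.eventually_analyticAt.and (hleft.and (hφA.and hφf)))
  choose hφ_an hleft hφA hφf using hball
  exact ⟨r, hr, fun w hw => (hφ_an w hw).differentiableAt.differentiableWithinAt,
    fun v hv w hw hvw => by rw [← hleft v hv, hvw, hleft w hw], hφA, hφ₀, hφf⟩

end Globalization

section Basin

/-- The basin of the point `x₀` under `f`: the points whose orbit converges to `x₀`. -/
def basin {X : Type*} [TopologicalSpace X] (f : X → X) (x₀ : X) : Set X :=
  {x | Tendsto (fun n => f^[n] x) atTop (𝓝 x₀)}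

/-- The immediate basin of `x₀` under `f`: the component of `basin f x₀` containing `x₀`, which is
empty when `x₀` is not in its own basin. -/
def immediateBasin {X : Type*} [TopologicalSpace X] (f : X → X) (x₀ : X) : Set X :=
  connectedComponentIn (basin f x₀) x₀

section TopologicalSpace

variable {X : Type*} [TopologicalSpace X] {f : X → X} {x₀ x : X}

lemma iterate_mem_basin_iff (n : ℕ) : f^[n] x ∈ basin f x₀ ↔ x ∈ basin f x₀ := by
  change Tendsto (fun k => f^[k] (f^[n] x)) atTop (𝓝 x₀) ↔ Tendsto (fun k => f^[k] x) atTop (𝓝 x₀)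
  rw [← tendsto_add_atTop_iff_nat (f := fun k => f^[k] x) n]
  simp only [Function.iterate_add_apply]

lemma apply_mem_basin_iff : f x ∈ basin f x₀ ↔ x ∈ basin f x₀ :=
  iterate_mem_basin_iff 1

lemma isOpen_basin (hf : Continuous f) (hx₀ : basin f x₀ ∈ 𝓝 x₀) : IsOpen (basin f x₀) := by
  rw [isOpen_iff_mem_nhds]
  intro x (hx : Tendsto (fun n => f^[n] x) atTop (𝓝 x₀))
  obtain ⟨n, hn⟩ := (hx.eventually (eventually_mem_nhds_iff.2 hx₀)).exists
  filter_upwards [(hf.iterate n).continuousAt.preimage_mem_nhds hn] with y hy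
  exact (iterate_mem_basin_iff n).1 hy

lemma mem_basin_of_mem_immediateBasin (hx : x ∈ immediateBasin f x₀) : x ∈ basin f x₀ :=
  connectedComponentIn_subset _ _ hx

lemma isPreconnected_immediateBasin : IsPreconnected (immediateBasin f x₀) :=
  isPreconnected_connectedComponentIn

lemma immediateBasin_mem_nhds [LocallyConnectedSpace X] (hx₀ : basin f x₀ ∈ 𝓝 x₀) :
    immediateBasin f x₀ ∈ 𝓝 x₀ :=
  connectedComponentIn_mem_nhds hx₀

lemma isOpen_immediateBasin [LocallyConnectedSpace X] (hf : Continuous f)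
    (hx₀ : basin f x₀ ∈ 𝓝 x₀) : IsOpen (immediateBasin f x₀) :=
  (isOpen_basin hf hx₀).connectedComponentIn

lemma mapsTo_immediateBasin (hf : Continuous f) (hfix : f x₀ = x₀) :
    MapsTo f (immediateBasin f x₀) (immediateBasin f x₀) := by
  intro x hx
  have hx₀ : x₀ ∈ immediateBasin f x₀ :=
    mem_connectedComponentIn (connectedComponentIn_nonempty_iff.1 ⟨x, hx⟩)
  have hsub : f '' immediateBasin f x₀ ⊆ basin f x₀ := by
    rintro _ ⟨y, hy, rfl⟩
    exact apply_mem_basin_iff.2 (mem_basin_of_mem_immediateBasin hy)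
  exact (isPreconnected_immediateBasin.image f hf.continuousOn).subset_connectedComponentIn
    ⟨x₀, hx₀, hfix⟩ hsub (mem_image_of_mem f hx)

lemma mem_immediateBasin_of_mem_closure (hx : x ∈ closure (immediateBasin f x₀))
    (hfx : f x ∈ immediateBasin f x₀) : x ∈ immediateBasin f x₀ := by
  have hx₀ : x₀ ∈ immediateBasin f x₀ :=
    mem_connectedComponentIn (connectedComponentIn_nonempty_iff.1 ⟨f x, hfx⟩)
  have hconn : IsPreconnected (insert x (immediateBasin f x₀)) :=
    isPreconnected_immediateBasin.subset_closure (subset_insert _ _)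
      (insert_subset hx subset_closure)
  exact hconn.subset_connectedComponentIn (mem_insert_of_mem x hx₀)
    (insert_subset (apply_mem_basin_iff.1 (mem_basin_of_mem_immediateBasin hfx))
      (connectedComponentIn_subset _ _)) (mem_insert x _)

end TopologicalSpace

lemma basin_mem_nhds_of_eventually_dist_le {X : Type*} [PseudoMetricSpace X] {f : X → X} {x₀ : X}
    {c : ℝ} (hc₀ : 0 ≤ c) (hc : c < 1) (hf : ∀ᶠ x in 𝓝 x₀, dist (f x) x₀ ≤ c * dist x x₀) :
    basin f x₀ ∈ 𝓝 x₀ := by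
  obtain ⟨ε, hε, hcontract⟩ := Metric.eventually_nhds_iff_ball.1 hf
  have hmapsTo : MapsTo f (ball x₀ ε) (ball x₀ ε) := fun x hx =>
    (hcontract x hx).trans_lt ((mul_le_of_le_one_left dist_nonneg hc.le).trans_lt hx)
  refine mem_of_superset (ball_mem_nhds x₀ hε) fun x hx => ?_
  have hiter (n : ℕ) : dist (f^[n] x) x₀ ≤ c ^ n * dist x x₀ := by
    induction n with
    | zero => simp
    | succ n ih =>
      rw [Function.iterate_succ_apply', pow_succ', mul_assoc]
      exact (hcontract _ (hmapsTo.iterate n hx)).trans (mul_le_mul_of_nonneg_left ih hc₀)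
  have hlim : Tendsto (fun n => c ^ n * dist x x₀) atTop (𝓝 0) := by
    simpa using (tendsto_pow_atTop_nhds_zero_of_lt_one hc₀ hc).mul_const (dist x x₀)
  exact tendsto_iff_dist_tendsto_zero.2 (squeeze_zero (fun _ => dist_nonneg) hiter hlim)

end Basin

lemma isClosedMap_mapsTo_restrict {X Y : Type*} [TopologicalSpace X] [TopologicalSpace Y]
    {f : X → Y} {A : Set X} {B : Set Y} (hf : IsClosedMap f) (hAB : MapsTo f A B)
    (hA : ∀ x ∈ closure A, f x ∈ B → x ∈ A) : IsClosedMap (hAB.restrict f A B) := by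
  intro C hC
  obtain ⟨C', hC', rfl⟩ := isClosed_induced_iff.1 hC
  refine isClosed_induced_iff.2 ⟨f '' (closure A ∩ C'), hf _ (isClosed_closure.inter hC'), ?_⟩
  ext y
  constructor
  · rintro ⟨x, ⟨hxA, hxC⟩, hxy⟩
    exact ⟨⟨x, hA x hxA (hxy ▸ y.2)⟩, hxC, Subtype.ext hxy⟩
  · rintro ⟨x, hx, rfl⟩
    exact ⟨x, ⟨subset_closure x.2, hx⟩, rfl⟩

lemma isLocalHomeomorphOn_mapsTo_restrict {X Y : Type*} [TopologicalSpace X] [TopologicalSpace Y]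
    {f : X → Y} {A s : Set X} {B : Set Y} (hf : IsLocalHomeomorphOn f s) (hA : IsOpen A)
    (hB : IsOpen B) (hAB : MapsTo f A B) :
    IsLocalHomeomorphOn (hAB.restrict f A B) (Subtype.val ⁻¹' s) := by
  refine .of_comp_left (g := Subtype.val)
    (hf.comp hA.isOpenEmbedding_subtypeVal.isLocalHomeomorph.isLocalHomeomorphOn fun _ => id)
    hB.isOpenEmbedding_subtypeVal.isLocalHomeomorph.isLocalHomeomorphOn fun x hx => ?_
  exact IsInducing.subtypeVal.continuousAt_iff.2
    ((hf.continuousAt hx).comp continuous_subtype_val.continuousAt)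

section AntiPolynomial

open Polynomial

/-- The anti-polynomial associated with `p`: the map `z ↦ p (conj z)`. -/
noncomputable def antiPolynomial (p : ℂ[X]) (z : ℂ) : ℂ :=
  p.eval (conj z)

namespace antiPolynomial

variable {p : ℂ[X]} {z₀ : ℂ}

lemma eq_eval_comp_conj (p : ℂ[X]) :
    antiPolynomial p = p.eval ∘ Complex.conjLIE.toHomeomorph := rfl

lemma continuous (p : ℂ[X]) : Continuous (antiPolynomial p) :=
  p.continuous.comp Complex.continuous_conj

lemma isClosedMap (p : ℂ[X]) : IsClosedMap (antiPolynomial p) :=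
  p.isClosedMap_eval.comp Complex.conjLIE.toHomeomorph.isClosedMap

lemma finite_preimage_singleton {w : ℂ} (hw : p ≠ C w) :
    (antiPolynomial p ⁻¹' {w}).Finite := by
  rw [eq_eval_comp_conj, preimage_comp, preimage_eval_singleton hw]
  exact (rootSet_finite _ _).preimage (Homeomorph.injective _).injOn

lemma hasDerivAt_conj (p : ℂ[X]) (z : ℂ) :
    HasDerivAt (fun z => conj (antiPolynomial p z)) (conj (p.derivative.eval (conj z))) z := by
  simpa [Function.comp_def] using! (p.hasDerivAt (conj z)).conj_conj

lemma isLocalHomeomorphOn (p : ℂ[X]) :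
    IsLocalHomeomorphOn (antiPolynomial p) {z | p.derivative.eval (conj z) ≠ 0} := by
  have heval : IsLocalHomeomorphOn p.eval {w | p.derivative.eval w ≠ 0} := fun w hw =>
    ⟨_, ((p.hasStrictDerivAt w).hasStrictFDerivAt_equiv hw).mem_toOpenPartialHomeomorph_source,
      by simp⟩
  exact heval.comp Complex.conjLIE.toHomeomorph.isLocalHomeomorph.isLocalHomeomorphOn fun _ => id

lemma analyticAt_conj_sub (p : ℂ[X]) (c z : ℂ) :
    AnalyticAt ℂ (fun z => conj (antiPolynomial p z - c)) z := by
  refine Differentiable.analyticAt (fun w => ?_) z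
  simpa only [map_sub] using (hasDerivAt_conj p w).differentiableAt.sub_const (conj c)

lemma analyticOrderAt_conj_sub {c : ℂ} (hc : p ≠ C c) (z : ℂ) :
    analyticOrderAt (fun z => conj (antiPolynomial p z - c)) z =
      (p - C c).rootMultiplicity (conj z) := by
  obtain ⟨q, hq, hqz⟩ :=
    exists_eq_pow_rootMultiplicity_mul_and_not_dvd (p - C c) (sub_ne_zero.2 hc) (conj z)
  refine (analyticAt_conj_sub p c z).analyticOrderAt_eq_natCast.2
    ⟨fun w => conj (antiPolynomial q w), ?_, ?_, .of_forall fun w => ?_⟩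
  · simpa using analyticAt_conj_sub q 0 z
  · exact (_root_.map_ne_zero _).2 fun h => hqz (dvd_iff_isRoot.2 h)
  · have heval := congrArg (eval (conj w)) hq
    simp only [eval_sub, eval_C, eval_mul, eval_pow, eval_X] at heval
    simp only [antiPolynomial, heval, map_mul, map_pow, map_sub, Complex.conj_conj, smul_eq_mul]

lemma isUnicriticalCovering_immediateBasin (hp : ∀ c, p ≠ C c)
    (hfix : antiPolynomial p z₀ = z₀)
    (hbasin : basin (antiPolynomial p) z₀ ∈ 𝓝 z₀)
    (hcrit : ∀ c ∈ immediateBasin (antiPolynomial p) z₀,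
      p.derivative.eval (conj c) = 0 → c = z₀) :
    IsUnicriticalCovering (antiPolynomial p) z₀ (immediateBasin (antiPolynomial p) z₀) := by
  set f := antiPolynomial p
  have hA : IsOpen (immediateBasin f z₀) := isOpen_immediateBasin (continuous p) hbasin
  have hfA : MapsTo f (immediateBasin f z₀) (immediateBasin f z₀) :=
    mapsTo_immediateBasin (continuous p) hfix
  refine ⟨hfA, fun z _ => by simpa using analyticAt_conj_sub p 0 z, fun z hz hz₀ => ?_, ?_⟩
  · rw [(hasDerivAt_conj p z).deriv]
    exact (_root_.map_ne_zero _).2 (mt (hcrit z hz) hz₀)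
  · refine (isClosedMap_mapsTo_restrict (isClosedMap p) hfA fun _ =>
      mem_immediateBasin_of_mem_closure).isCoveringMapOn_of_isLocalHomeomorphOn (fun w _ => ?_) ?_
    · refine ((finite_preimage_singleton (hp w.1)).preimage
        Subtype.val_injective.injOn).subset fun z hz => congrArg Subtype.val hz
    · refine (isLocalHomeomorphOn_mapsTo_restrict (isLocalHomeomorphOn p) hA hA hfA).mono
        fun z hz hcz => hz ?_
      change f z = z₀
      rw [hcrit z z.2 hcz, hfix]

end antiPolynomial

end AntiPolynomial

/-- Boettcher coordinate on a superattracting immediate basin of an anti-polynomial: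
if the immediate basin `A` of a superattracting fixed point `z₀` of local degree `m ≥ 2`
contains no other critical point, then `A` is simply connected and there is a conformal
map `φ` of the unit disk onto `A` with `φ 0 = z₀` conjugating `w ↦ (conj w)^m` to `f`. -/
theorem stmt9 (p : Polynomial ℂ) (d : ℕ) (hd : 2 ≤ d) (hdeg : p.natDegree = d)
    (f : ℂ → ℂ) (hf : ∀ z, f z = p.eval ((starRingEnd ℂ) z))
    (z₀ : ℂ) (hfix : f z₀ = z₀)
    (hcrit0 : p.derivative.eval ((starRingEnd ℂ) z₀) = 0)
    (m : ℕ) (hm : 2 ≤ m)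
    (hmdef : m = (p - Polynomial.C z₀).rootMultiplicity ((starRingEnd ℂ) z₀))
    (A : Set ℂ)
    (hA : A = connectedComponentIn
      {z : ℂ | Tendsto (fun n => f^[n] z) atTop (𝓝 z₀)} z₀)
    (honlycrit : ∀ c ∈ A, p.derivative.eval ((starRingEnd ℂ) c) = 0 → c = z₀) :
    SimplyConnectedSpace A ∧
    ∃ φ : ℂ → ℂ, AnalyticOnNhd ℂ φ (Metric.ball (0 : ℂ) 1) ∧
      Set.InjOn φ (Metric.ball (0 : ℂ) 1) ∧
      φ 0 = z₀ ∧
      φ '' Metric.ball (0 : ℂ) 1 = A ∧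
      ∀ w ∈ Metric.ball (0 : ℂ) 1, f (φ w) = φ (((starRingEnd ℂ) w)^m) := by
  obtain rfl : f = antiPolynomial p := funext hf
  obtain rfl : A = immediateBasin (antiPolynomial p) z₀ := hA
  have hp (c : ℂ) : p ≠ Polynomial.C c := by
    rintro rfl
    rw [Polynomial.natDegree_C] at hdeg
    omega
  have hF := antiPolynomial.analyticAt_conj_sub p z₀ z₀
  have hord : analyticOrderAt (fun z => conj (antiPolynomial p z - z₀)) z₀ = m := by
    rw [antiPolynomial.analyticOrderAt_conj_sub (hp z₀), hmdef]
  have hbasin : basin (antiPolynomial p) z₀ ∈ 𝓝 z₀ :=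
    basin_mem_nhds_of_eventually_dist_le one_half_pos.le one_half_lt_one
      (eventually_dist_le_half_of_two_le_analyticOrderAt hF (hord ▸ by exact_mod_cast hm))
  have hcover := antiPolynomial.isUnicriticalCovering_immediateBasin hp hfix hbasin honlycrit
  obtain ⟨φ₀, hφ₀, hφ₀_zero, hφ₀_deriv, hφ₀_conj⟩ :=
    exists_boettcher_parametrization_germ hm hF hord
  obtain ⟨r, hr, hφ₀⟩ := exists_isBoettcherParametrization_of_germ (immediateBasin_mem_nhds hbasin)
    hφ₀ hφ₀_zero hφ₀_deriv hφ₀_conj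
  obtain ⟨φ, hφ⟩ := hφ₀.exists_unit_ball hcover hm hr
  have himage : φ '' ball 0 1 = immediateBasin (antiPolynomial p) z₀ :=
    hφ.image_ball_eq (by omega) (antiPolynomial.continuous p) isPreconnected_immediateBasin
      fun z hz => mem_basin_of_mem_immediateBasin hz
  exact ⟨himage ▸ simplyConnectedSpace_image_of_convex isOpen_ball (convex_ball 0 1)
      (nonempty_ball.2 one_pos) hφ.differentiableOn hφ.injOn,
    φ, hφ.differentiableOn.analyticOnNhd isOpen_ball, hφ.injOn, hφ.apply_zero, himage,
    hφ.map_conj_pow⟩
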